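/- Let R = K[a,b,c,x,y,z] and I = (a^k b^k, b^m c^m, a^p x^p, b^q y^q, c^r z^r) with positive integers k < m and p, q, r. If R/I^n is Cohen-Macaulay for all n ≥ 1, then p ≥ k·⌈m/(m−k)⌉. -/

import Mathlib

open MvPolynomial

/-- `R/I` is Cohen–Macaulay: there is a regular sequence on `R/I` contained in the
maximal ideal generated by the variables whose length equals the Krull dimension of `R/I`. -/
def IsCMQuot {K : Type*} [Field K] {σ : Type*} (I : Ideal (MvPolynomial σ K)) : Prop :=
  ∃ rs : List (MvPolynomial σ K),
    (∀ r ∈ rs, r ∈ Ideal.span (Set.range (X : σ → MvPolynomial σ K))) ∧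
    RingTheory.Sequence.IsRegular (MvPolynomial σ K ⧸ I) rs ∧
    (rs.length : WithBot (WithTop ℕ)) = ringKrullDim (MvPolynomial σ K ⧸ I)

theorem aux_exists_ass {R : Type*} [CommRing R] [IsNoetherianRing R] {M : Type*} [AddCommGroup M]
    [Module R M] [Module.Finite R M] (𝔪 : PrimeSpectrum R) (h : 𝔪 ∈ Module.support R M) :
    ∃ Q : PrimeSpectrum R, Q.asIdeal ∈ associatedPrimes R M ∧
      Module.annihilator R M ≤ Q.asIdeal ∧ Q ≤ 𝔪 := by
  have h1 := Module.annihilator_le_of_mem_support h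
  obtain ⟨Q, hQ, hle⟩ := Ideal.exists_minimalPrimes_le h1
  exact ⟨⟨Q, hQ.isPrime⟩, Module.associatedPrimes.minimalPrimes_annihilator_subset_associatedPrimes
    R M hQ, hQ.1.2, hle⟩

theorem aux_step {R : Type*} [CommRing R] [IsNoetherianRing R] {M : Type*} [AddCommGroup M]
    [Module R M] [Module.Finite R M] (𝔪 P : PrimeSpectrum R) (hP : P.asIdeal ∈ associatedPrimes R M)
    (hPm : P ≤ 𝔪) (x : R) (hx : x ∈ 𝔪.asIdeal) (hreg : IsSMulRegular M x) :
    ∃ Q : PrimeSpectrum R, Q.asIdeal ∈ associatedPrimes R (QuotSMulTop x M) ∧ P < Q ∧ Q ≤ 𝔪 := by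
  obtain ⟨-, w, hw⟩ := (isAssociatedPrime_iff).1 hP
  have hw' : ∀ r, r ∈ P.asIdeal ↔ r • w = 0 := by
    intro r; rw [hw, Submodule.mem_colon_singleton, Submodule.mem_bot]
  let N := Submodule.torsionBySet R M P.asIdeal
  have hNmem : ∀ v, v ∈ N ↔ ∀ a ∈ P.asIdeal, a • v = 0 := by
    intro v; simp [N, Submodule.mem_torsionBySet_iff]
  have hwN : w ∈ N := (hNmem w).2 fun a ha => (hw' a).1 ha
  have hsupp : 𝔪 ∈ Module.support R N := by
    rw [Module.mem_support_iff']
    refine ⟨⟨w, hwN⟩, fun r hr h0 => hr (hPm ((hw' r).2 ?_))⟩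
    simpa using congrArg Subtype.val h0
  have hsupp2 : 𝔪 ∈ Module.support R (QuotSMulTop x N) := by
    rw [Module.support_quotSMulTop]
    exact ⟨hsupp, by simpa using hx⟩
  obtain ⟨Q, hQ, hann, hQm⟩ := aux_exists_ass 𝔪 hsupp2
  have hinj : Function.Injective (QuotSMulTop.map x N.subtype) := by
    rw [injective_iff_map_eq_zero]
    intro v hv
    obtain ⟨v, rfl⟩ := Submodule.Quotient.mk_surjective _ v
    rw [QuotSMulTop.map_apply_mk, Submodule.Quotient.mk_eq_zero,
      Submodule.mem_smul_pointwise_iff_exists] at hv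
    obtain ⟨u, -, hu⟩ := hv
    rw [Submodule.Quotient.mk_eq_zero, Submodule.mem_smul_pointwise_iff_exists]
    refine ⟨⟨u, (hNmem u).2 fun a ha => hreg ?_⟩, trivial, Subtype.ext hu⟩
    simp only [smul_zero]
    rw [smul_comm, hu]
    exact (hNmem _).1 v.2 a ha
  have hPann : P.asIdeal ≤ Module.annihilator R (QuotSMulTop x N) := by
    intro a ha
    rw [Module.mem_annihilator]
    intro v
    obtain ⟨v, rfl⟩ := Submodule.Quotient.mk_surjective _ v
    rw [← Submodule.Quotient.mk_smul]
    have : a • v = 0 := Subtype.ext ((hNmem _).1 v.2 a ha)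
    rw [this]; simp
  have hxann : x ∈ Module.annihilator R (QuotSMulTop x N) := by
    rw [Module.mem_annihilator]
    intro v
    obtain ⟨v, rfl⟩ := Submodule.Quotient.mk_surjective _ v
    rw [← Submodule.Quotient.mk_smul, Submodule.Quotient.mk_eq_zero]
    exact Submodule.smul_mem_pointwise_smul _ _ _ trivial
  have hxP : x ∉ P.asIdeal := by
    intro h
    have h1 := (hw' x).1 h
    have h2 : w = 0 := hreg (by simpa using h1)
    exact P.isPrime.ne_top ((Ideal.eq_top_iff_one _).2 ((hw' 1).2 (by simp [h2])))
  refine ⟨Q, IsAssociatedPrime.map_of_injective _ hQ hinj, ?_, hQm⟩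
  refine lt_of_le_of_ne (hPann.trans hann) ?_
  rintro rfl
  exact hxP (hann hxann)

theorem aux_len {R : Type*} [CommRing R] [IsNoetherianRing R] (𝔪 : PrimeSpectrum R) (rs : List R)
    (hrs : ∀ r ∈ rs, r ∈ 𝔪.asIdeal) : ∀ {M : Type _} [AddCommGroup M]
    [Module R M] [Module.Finite R M] (P : PrimeSpectrum R) (_ : P.asIdeal ∈ associatedPrimes R M)
    (_ : P ≤ 𝔪) (_ : RingTheory.Sequence.IsWeaklyRegular M rs),
    (rs.length : ℕ∞) ≤ Order.coheight P := by
  induction rs with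
  | nil => intros; simp
  | cons x rs ih =>
    intro M _ _ _ P hP hPm hreg
    rw [RingTheory.Sequence.isWeaklyRegular_cons_iff] at hreg
    obtain ⟨Q, hQ, hlt, hQm⟩ := aux_step 𝔪 P hP hPm x (hrs x (by simp)) hreg.1
    have := ih (fun r hr => hrs r (by simp [hr])) (M := QuotSMulTop x M) Q hQ hQm hreg.2
    calc ((x :: rs).length : ℕ∞) = rs.length + 1 := by simp
      _ ≤ Order.coheight Q + 1 := by gcongr
      _ ≤ _ := Order.coheight_add_one_le hlt

theorem aux_dim_upper {K : Type*} [Field K] (P : PrimeSpectrum (MvPolynomial (Fin 6) K))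
    (s : Finset (Fin 6)) (hs : s.card = 4) (h : ∀ i ∈ s, X i ∈ P.asIdeal) :
    Order.coheight P ≤ 2 := by
  have h1 : (Order.coheight P : WithBot ℕ∞) ≤ ringKrullDim (MvPolynomial (Fin 6) K ⧸ P.asIdeal) := by
    rw [ringKrullDim_quotient, Order.coheight_eq_krullDim_Ici]
    refine Order.krullDim_le_of_strictMono (fun Q => ⟨Q.1, Q.2⟩) ?_
    intro a b hab; exact hab
  have h2 : ringKrullDim (MvPolynomial (Fin 6) K ⧸ P.asIdeal) ≤
      ringKrullDim (MvPolynomial {i // i ∉ s} K) := by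
    let f : MvPolynomial {i // i ∉ s} K →ₐ[K] MvPolynomial (Fin 6) K ⧸ P.asIdeal :=
      aeval fun i => Ideal.Quotient.mk P.asIdeal (X i.1)
    refine ringKrullDim_le_of_surjective f.toRingHom ?_
    change Function.Surjective f
    rw [← AlgHom.range_eq_top]
    have hg : ((Ideal.Quotient.mkₐ K P.asIdeal).comp (AlgHom.id K _)).range ≤ f.range := by
      rw [AlgHom.comp_id, ← Algebra.map_top, ← MvPolynomial.adjoin_range_X, AlgHom.map_adjoin,
        Algebra.adjoin_le_iff]
      rintro _ ⟨_, ⟨i, rfl⟩, rfl⟩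
      by_cases hi : i ∈ s
      · have : (Ideal.Quotient.mkₐ K P.asIdeal) (X i) = 0 := Ideal.Quotient.eq_zero_iff_mem.2 (h i hi)
        rw [this]; exact zero_mem _
      · exact ⟨X ⟨i, hi⟩, by simp [f]⟩
    rw [eq_top_iff]
    refine le_trans ?_ hg
    rintro y -
    obtain ⟨y, rfl⟩ := Ideal.Quotient.mk_surjective y
    exact ⟨y, rfl⟩
  have h3 : ringKrullDim (MvPolynomial {i // i ∉ s} K) = 2 := by
    rw [MvPolynomial.ringKrullDim_of_isNoetherianRing, ringKrullDim_eq_zero_of_field]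
    simp [Fintype.card_subtype_compl, hs]
  have := (h1.trans h2).trans h3.le
  exact WithBot.coe_le_coe.1 this

theorem aux_dim_lower {K : Type*} [Field K] (J : Ideal (MvPolynomial (Fin 6) K))
    (h : J ≤ Ideal.span {X 0, X 1, X 2}) :
    3 ≤ ringKrullDim (MvPolynomial (Fin 6) K ⧸ J) := by
  let g : MvPolynomial (Fin 6) K →ₐ[K] MvPolynomial (Fin 3) K :=
    aeval ![0, 0, 0, X 0, X 1, X 2]
  have hg : ∀ a ∈ J, g.toRingHom a = 0 := by
    intro a ha
    have : Ideal.span {X 0, X 1, X 2} ≤ RingHom.ker g.toRingHom := by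
      rw [Ideal.span_le]
      rintro _ (rfl | rfl | rfl) <;> simp [g, RingHom.mem_ker]
    exact this (h ha)
  have h2 : ringKrullDim (MvPolynomial (Fin 3) K) ≤ ringKrullDim (MvPolynomial (Fin 6) K ⧸ J) := by
    refine ringKrullDim_le_of_surjective (Ideal.Quotient.lift J g.toRingHom hg) ?_
    apply Ideal.Quotient.lift_surjective_of_surjective
    change Function.Surjective g
    rw [← AlgHom.range_eq_top, eq_top_iff, ← MvPolynomial.adjoin_range_X, Algebra.adjoin_le_iff]
    rintro _ ⟨i, rfl⟩
    fin_cases i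
    · exact ⟨X 3, by simp [g]⟩
    · exact ⟨X 4, by simp [g]⟩
    · exact ⟨X 5, by simp [g]⟩
  rw [MvPolynomial.ringKrullDim_of_isNoetherianRing, ringKrullDim_eq_zero_of_field] at h2
  simpa using h2

/-- main criterion -/
theorem aux_main {K : Type*} [Field K] (J : Ideal (MvPolynomial (Fin 6) K))
    (hJ : J ≤ Ideal.span {X 0, X 1, X 2}) (u : MvPolynomial (Fin 6) K)
    (hu : ∀ f, f * u ∈ J → constantCoeff f = 0)
    (s : Finset (Fin 6)) (hs : s.card = 4) (h : ∀ i ∈ s, ∃ N : ℕ, X i ^ N * u ∈ J)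
    (hCM : IsCMQuot J) : False := by
  obtain ⟨rs, hrs, hreg, hlen⟩ := hCM
  let 𝔪 : PrimeSpectrum (MvPolynomial (Fin 6) K) :=
    ⟨RingHom.ker (constantCoeff : MvPolynomial (Fin 6) K →+* K), RingHom.ker_isPrime _⟩
  have hrs' : ∀ r ∈ rs, r ∈ 𝔪.asIdeal := by
    intro r hr
    have : Ideal.span (Set.range (X : Fin 6 → MvPolynomial (Fin 6) K)) ≤ 𝔪.asIdeal := by
      rw [Ideal.span_le]
      rintro _ ⟨i, rfl⟩
      simp [𝔪, RingHom.mem_ker]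
    exact this (hrs r hr)
  let w : MvPolynomial (Fin 6) K ⧸ J := Ideal.Quotient.mk J u
  let N := Submodule.span (MvPolynomial (Fin 6) K) {w}
  have hsm : ∀ f : MvPolynomial (Fin 6) K, f • w = Ideal.Quotient.mk J (f * u) := fun f => rfl
  have hsupp : 𝔪 ∈ Module.support (MvPolynomial (Fin 6) K) N := by
    rw [Module.mem_support_iff']
    refine ⟨⟨w, Submodule.mem_span_singleton_self w⟩, fun r hr h0 => hr ?_⟩
    have h1 : r • w = 0 := congrArg Subtype.val h0
    rw [hsm, Ideal.Quotient.eq_zero_iff_mem] at h1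
    exact hu r h1
  obtain ⟨P, hP, hann, hPm⟩ := aux_exists_ass 𝔪 hsupp
  have hP' : P.asIdeal ∈ associatedPrimes (MvPolynomial (Fin 6) K) (MvPolynomial (Fin 6) K ⧸ J) :=
    IsAssociatedPrime.map_of_injective _ hP N.subtype_injective
  have h1 := aux_len 𝔪 rs hrs' P hP' hPm hreg.toIsWeaklyRegular
  have h2 := aux_dim_upper P s hs (by
    intro i hi
    obtain ⟨n, hn⟩ := h i hi
    refine P.isPrime.mem_of_pow_mem n (hann ?_)
    change _ ∈ Submodule.annihilator N
    rw [Submodule.mem_annihilator_span_singleton, hsm, Ideal.Quotient.eq_zero_iff_mem]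
    exact hn)
  have h3 := aux_dim_lower J hJ
  rw [← hlen] at h3
  have h4 : rs.length ≤ 2 := by exact_mod_cast h1.trans h2
  have h5 : 3 ≤ rs.length := by
    change ((3 : ℕ) : WithBot ℕ∞) ≤ ((rs.length : ℕ) : WithBot ℕ∞) at h3
    exact_mod_cast h3
  omega

/-- exponent condition for membership in the `n`-th power -/
def AuxE (k m p q r n : ℕ) (d : Fin 6 → ℕ) : Prop :=
  ∃ i₁ i₂ i₃ i₄ i₅ : ℕ, n ≤ i₁ + i₂ + i₃ + i₄ + i₅ ∧ k * i₁ + p * i₃ ≤ d 0 ∧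
    k * i₁ + m * i₂ + q * i₄ ≤ d 1 ∧ m * i₂ + r * i₅ ≤ d 2 ∧ p * i₃ ≤ d 3 ∧ q * i₄ ≤ d 4 ∧
    r * i₅ ≤ d 5

theorem AuxE.add {k m p q r n n' : ℕ} {d d' : Fin 6 → ℕ} (h : AuxE k m p q r n d)
    (h' : AuxE k m p q r n' d') : AuxE k m p q r (n + n') (d + d') := by
  obtain ⟨a1, a2, a3, a4, a5, h0, h1, h2, h3, h4, h5, h6⟩ := h
  obtain ⟨b1, b2, b3, b4, b5, g0, g1, g2, g3, g4, g5, g6⟩ := h'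
  refine ⟨a1 + b1, a2 + b2, a3 + b3, a4 + b4, a5 + b5, ?_, ?_, ?_, ?_, ?_, ?_, ?_⟩ <;>
    (try simp only [Pi.add_apply, mul_add]) <;> omega

theorem AuxE.zero {k m p q r : ℕ} (d : Fin 6 → ℕ) : AuxE k m p q r 0 d :=
  ⟨0, 0, 0, 0, 0, by simp⟩

/-- the monomial ideal of exponents satisfying the condition -/
noncomputable def auxL (K : Type*) [Field K] (k m p q r n : ℕ) : Ideal (MvPolynomial (Fin 6) K) where
  carrier := {f | ∀ d, coeff d f ≠ 0 → AuxE k m p q r n d}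
  zero_mem' := by intro d hd; simp at hd
  add_mem' := by
    intro f g hf hg d hd
    by_cases h : coeff d f = 0
    · exact hg d (by simpa [h] using hd)
    · exact hf d h
  smul_mem' := by
    intro c f hf d hd
    rw [smul_eq_mul, coeff_mul] at hd
    obtain ⟨⟨x, y⟩, hxy, hne⟩ := Finset.exists_ne_zero_of_sum_ne_zero hd
    rw [Finset.HasAntidiagonal.mem_antidiagonal] at hxy
    have := (AuxE.zero (k := k) (m := m) (p := p) (q := q) (r := r) (⇑x)).add
      (hf y (right_ne_zero_of_mul hne))
    rw [zero_add, ← Finsupp.coe_add] at this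
    rw [← hxy]; exact this

/-- the ideal -/
noncomputable abbrev auxI (K : Type*) [Field K] (k m p q r : ℕ) : Ideal (MvPolynomial (Fin 6) K) :=
  Ideal.span ({(X 0) ^ k * (X 1) ^ k, (X 1) ^ m * (X 2) ^ m,
          (X 0) ^ p * (X 3) ^ p, (X 1) ^ q * (X 4) ^ q, (X 2) ^ r * (X 5) ^ r} :
          Set (MvPolynomial (Fin 6) K))

theorem aux_gen {K : Type*} [Field K] (k m p q r : ℕ) (i j : Fin 6) (e : ℕ)
    (h : AuxE k m p q r 1 ⇑(Finsupp.single i e + Finsupp.single j e)) :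
    (X i ^ e * X j ^ e : MvPolynomial (Fin 6) K) ∈ auxL K k m p q r 1 := by
  intro d hd
  rw [X_pow_eq_monomial, X_pow_eq_monomial, monomial_mul, coeff_monomial] at hd
  split_ifs at hd with h1
  · rw [← h1]; exact h
  · simp at hd

theorem auxI_le {K : Type*} [Field K] (k m p q r : ℕ) : auxI K k m p q r ≤ auxL K k m p q r 1 := by
  rw [Ideal.span_le]
  rintro _ (rfl | rfl | rfl | rfl | rfl)
  · exact aux_gen _ _ _ _ _ _ _ _ ⟨1, 0, 0, 0, 0, by simp⟩
  · exact aux_gen _ _ _ _ _ _ _ _ ⟨0, 1, 0, 0, 0, by simp⟩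
  · exact aux_gen _ _ _ _ _ _ _ _ ⟨0, 0, 1, 0, 0, by simp⟩
  · exact aux_gen _ _ _ _ _ _ _ _ ⟨0, 0, 0, 1, 0, by simp⟩
  · exact aux_gen _ _ _ _ _ _ _ _ ⟨0, 0, 0, 0, 1, by simp⟩

theorem auxI_pow_le {K : Type*} [Field K] (k m p q r n : ℕ) :
    auxI K k m p q r ^ n ≤ auxL K k m p q r n := by
  induction n with
  | zero => intro f _ d _; exact AuxE.zero _
  | succ n ih =>
    rw [pow_succ, Ideal.mul_le]
    intro f hf g hg d hd
    rw [coeff_mul] at hd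
    obtain ⟨⟨x, y⟩, hxy, hne⟩ := Finset.exists_ne_zero_of_sum_ne_zero hd
    rw [Finset.HasAntidiagonal.mem_antidiagonal] at hxy
    have := (ih hf x (left_ne_zero_of_mul hne)).add
      (auxI_le k m p q r hg y (right_ne_zero_of_mul hne))
    rw [← Finsupp.coe_add] at this
    rw [← hxy]; exact this

theorem aux_mem {K : Type*} [Field K] {k m p q r n : ℕ} {d : Fin 6 → ℕ}
    (h : AuxE k m p q r n d) :
    (∏ i, X i ^ d i : MvPolynomial (Fin 6) K) ∈ auxI K k m p q r ^ n := by
  obtain ⟨a1, a2, a3, a4, a5, h0, h1, h2, h3, h4, h5, h6⟩ := h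
  obtain ⟨e0, h1⟩ := Nat.exists_eq_add_of_le h1
  obtain ⟨e1, h2⟩ := Nat.exists_eq_add_of_le h2
  obtain ⟨e2, h3⟩ := Nat.exists_eq_add_of_le h3
  obtain ⟨e3, h4⟩ := Nat.exists_eq_add_of_le h4
  obtain ⟨e4, h5⟩ := Nat.exists_eq_add_of_le h5
  obtain ⟨e5, h6⟩ := Nat.exists_eq_add_of_le h6
  refine Ideal.pow_le_pow_right h0 ?_
  have key : (∏ i, X i ^ d i : MvPolynomial (Fin 6) K) =
      (((((X 0) ^ k * (X 1) ^ k) ^ a1 * ((X 1) ^ m * (X 2) ^ m) ^ a2 *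
          ((X 0) ^ p * (X 3) ^ p) ^ a3 * ((X 1) ^ q * (X 4) ^ q) ^ a4 *
          ((X 2) ^ r * (X 5) ^ r) ^ a5)) *
      (X 0 ^ e0 * X 1 ^ e1 * X 2 ^ e2 * X 3 ^ e3 * X 4 ^ e4 * X 5 ^ e5)) := by
    rw [Fin.prod_univ_six, h1, h2, h3, h4, h5, h6]
    ring
  rw [key, pow_add, pow_add, pow_add, pow_add]
  refine Ideal.mul_mem_right _ _ ?_
  refine Ideal.mul_mem_mul (Ideal.mul_mem_mul (Ideal.mul_mem_mul (Ideal.mul_mem_mul ?_ ?_) ?_) ?_) ?_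
  all_goals exact Ideal.pow_mem_pow (Ideal.subset_span (by simp)) _

theorem aux_main2 {K : Type*} [Field K] {k m p q r n : ℕ} (hk : 0 < k) (hm : 0 < m) (hp : 0 < p)
    (hq : 0 < q) (hr : 0 < r) (hn : 1 ≤ n) (d : Fin 6 → ℕ)
    (hd : ¬ AuxE k m p q r n d) (s : Finset (Fin 6)) (hs : s.card = 4)
    (h : ∀ i ∈ s, ∃ N : ℕ, AuxE k m p q r n (d + Pi.single i N))
    (hCM : IsCMQuot (auxI K k m p q r ^ n)) : False := by
  refine aux_main _ ?_ (∏ i, X i ^ d i) ?_ s hs ?_ hCM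
  · refine (Ideal.pow_le_self (by omega)).trans ?_
    have h0 : ∀ i ∈ ({X 0, X 1, X 2} : Set (MvPolynomial (Fin 6) K)), ∀ e, 0 < e →
        i ^ e ∈ Ideal.span ({X 0, X 1, X 2} : Set (MvPolynomial (Fin 6) K)) :=
      fun i hi e he => Ideal.pow_mem_of_mem _ (Ideal.subset_span hi) _ he
    rw [Ideal.span_le]
    rintro _ (rfl | rfl | rfl | rfl | rfl) <;> refine Ideal.mul_mem_right _ _ (h0 _ ?_ _ ?_) <;>
      first | assumption | simp
  · intro f hf
    by_contra hc
    apply hd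
    have hmon : (∏ i, X i ^ d i : MvPolynomial (Fin 6) K) =
        monomial (Finsupp.equivFunOnFinite.symm d) 1 := by
      rw [monomial_eq, Finsupp.prod_fintype _ _ (by simp)]
      simp
    rw [hmon] at hf
    have := auxI_pow_le k m p q r n hf (0 + Finsupp.equivFunOnFinite.symm d) (by
      rw [coeff_mul_monomial, mul_one]; exact hc)
    simpa using this
  · intro i hi
    obtain ⟨N, hN⟩ := h i hi
    refine ⟨N, ?_⟩
    have := aux_mem (K := K) hN
    convert this using 1
    simp only [Pi.add_apply, pow_add, Finset.prod_mul_distrib]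
    rw [mul_comm]
    congr 1
    rw [Finset.prod_eq_single i]
    · simp
    · intro j _ hj; simp [Pi.single_eq_of_ne hj]
    · simp

/-- For the weighted edge ideal `I = (a^k b^k, b^m c^m, a^p x^p, b^q y^q, c^r z^r)` of the
tree with edges `{ab, bc, ax, by, cz}` in `R = K[a,b,c,x,y,z]` (here `a = X 0`, `b = X 1`,
`c = X 2`, `x = X 3`, `y = X 4`, `z = X 5`) with `k < m`: if `R/I^n` is Cohen–Macaulay
for all `n ≥ 1`, then `p ≥ k·⌈m/(m−k)⌉` (with `⌈m/(m−k)⌉ = (m + (m−k) − 1)/(m−k)` the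
ceiling of `m/(m−k)`). -/
theorem p_lower_bound_of_cm {K : Type*} [Field K] (k m p q r : ℕ)
    (hk : 0 < k) (hkm : k < m) (hp : 0 < p) (hq : 0 < q) (hr : 0 < r)
    (hCM : ∀ n : ℕ, 1 ≤ n →
      IsCMQuot ((Ideal.span ({(X 0) ^ k * (X 1) ^ k, (X 1) ^ m * (X 2) ^ m,
          (X 0) ^ p * (X 3) ^ p, (X 1) ^ q * (X 4) ^ q, (X 2) ^ r * (X 5) ^ r} :
          Set (MvPolynomial (Fin 6) K))) ^ n)) :
    k * ((m + (m - k) - 1) / (m - k)) ≤ p := by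
  have hm : 0 < m := hk.trans hkm
  have hqm : m ≤ q := by
    by_contra hlt
    push Not at hlt
    refine aux_main2 (n := 1) hk hm hp hq hr le_rfl
      ![0, m - 1, m + p + r, m + p + r, 0, 0] ?_ {0, 1, 4, 5} (by decide) ?_ (hCM 1 le_rfl)
    · rintro ⟨i1, i2, i3, i4, i5, h0, h1, h2, h3, h4, h5, h6⟩
      simp at h1 h2 h3 h4 h5 h6
      have e1 : i1 = 0 := by rcases h1.1 with h | h <;> omega
      have e3 : i3 = 0 := by rcases h1.2 with h | h <;> omega
      have e4 : i4 = 0 := by rcases h5 with h | h <;> omega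
      have e5 : i5 = 0 := by rcases h6 with h | h <;> omega
      subst e1 e3 e4 e5
      have : 1 ≤ i2 := by omega
      have := Nat.mul_le_mul_left m this
      omega
    · intro i hi
      simp only [Finset.mem_insert, Finset.mem_singleton] at hi
      rcases hi with rfl | rfl | rfl | rfl
      · exact ⟨p, 0, 0, 1, 0, 0, by simp; omega⟩
      · exact ⟨1, 0, 1, 0, 0, 0, by simp; omega⟩
      · exact ⟨q, 0, 0, 0, 1, 0, by simp; omega⟩
      · exact ⟨r, 0, 0, 0, 0, 1, by simp⟩
  obtain ⟨D, rfl⟩ := Nat.exists_eq_add_of_lt hkm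
  have hD : k + D + 1 - k = D + 1 := by omega
  rw [hD]
  have hs : (k + D + 1 + (D + 1) - 1) / (D + 1) = (k + D) / (D + 1) + 1 := by
    rw [← Nat.add_div_right _ (by omega)]
    congr 1; omega
  rw [hs]
  set t := (k + D) / (D + 1) with ht
  have hdm := Nat.div_add_mod (k + D) (D + 1)
  have hml := Nat.mod_lt (k + D) (show 0 < D + 1 by omega)
  rw [← ht] at hdm
  have ht1 : k ≤ (D + 1) * t := by omega
  have ht2 : (D + 1) * t ≤ k + D := by omega
  clear_value t
  by_contra hlt
  push Not at hlt
  refine aux_main2 (n := t + 1) hk hm hp hq hr (by omega)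
      ![p, (k + D + 1) * t, (k + D + 1 + r) * (t + 1), 0, (k + D + 1 + r) * (t + 1), 0] ?_
      {0, 1, 3, 5} (by decide) ?_ (hCM (t + 1) (by omega))
  · rintro ⟨i1, i2, i3, i4, i5, h0, h1, h2, h3, h4, h5, h6⟩
    simp at h1 h2 h3 h4 h5 h6
    have e3 : i3 = 0 := by rcases h4 with h | h <;> omega
    have e5 : i5 = 0 := by rcases h6 with h | h <;> omega
    subst e3 e5
    have hi1 : i1 < t + 1 := by
      have : k * i1 < k * (t + 1) := by simpa using lt_of_le_of_lt h1 hlt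
      exact lt_of_mul_lt_mul_left this (Nat.zero_le _)
    obtain ⟨c, rfl⟩ := Nat.exists_eq_add_of_le (Nat.le_of_lt_succ hi1)
    have h7 : (k + D + 1) * i4 ≤ q * i4 := Nat.mul_le_mul_right _ hqm
    have h8 : (k + D + 1) * (c + 1) ≤ (k + D + 1) * (i2 + i4) := Nat.mul_le_mul_left _ (by omega)
    have h9 : (D + 1) * i1 ≤ (D + 1) * (i1 + c) := Nat.mul_le_mul_left _ (by omega)
    nlinarith
  · intro i hi
    simp only [Finset.mem_insert, Finset.mem_singleton] at hi
    rcases hi with rfl | rfl | rfl | rfl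
    · refine ⟨k * (t + 1), t + 1, 0, 0, 0, 0, ?_⟩
      simp
      nlinarith
    · refine ⟨k + D + 1, 0, t + 1, 0, 0, 0, ?_⟩
      simp
      constructor <;> nlinarith
    · refine ⟨p, 0, t, 1, 0, 0, ?_⟩
      simp
      nlinarith
    · refine ⟨r * (t + 1), 0, 0, 0, 0, t + 1, ?_⟩
      simp
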